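/- arXiv:2603.27478 — 7 statements merged into one kernel-verified Lean document; each statement's English description precedes it below -/
import Mathlib

section
/- Let U : ℝ → ℝ be twice continuously differentiable and convex, let f̂, F̂ : ℝ × ℝ → ℝ be given two-point functions, and let u_L, ū, u_R ∈ ℝ and λ > 0. Set A = f̂(ū, u_R), B = f̂(u_L, ū), FA = F̂(ū, u_R), FB = F̂(u_L, ū), and define the updated cell average u⁺ = ū − λ(A − B). If the CFL-type condition λ · (sup_{ξ ∈ [min(ū,u⁺), max(ū,u⁺)]} U''(ξ)) · (A − B)² ≤ 2·(U'(ū)(A − B) − FA + FB) holds, then the fully discrete cell entropy inequality U(u⁺) ≤ U(ū) − λ(FA − FB) holds. -/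
/-!
If `U'' ≤ K`, then `x ↦ K / 2 * x² - U x` is convex and lies above its tangent line at `ū`, which is
the quadratic bound `U u⁺ ≤ U ū - λ U'(ū) (A - B) + K / 2 * λ² (A - B)²`. The CFL condition,
multiplied by `λ / 2`, says that the last two terms together are at most `-λ (FA - FB)`.
-/

lemma add_deriv_mul_sub_le_of_convexOn {s : Set ℝ} {f : ℝ → ℝ} {f' a b : ℝ}
    (hf : ConvexOn ℝ s f) (ha : a ∈ s) (hb : b ∈ s) (hf' : HasDerivWithinAt f f' s a) :
    f a + f' * (b - a) ≤ f b := by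
  rcases lt_trichotomy a b with hab | rfl | hba
  · have hslope : f' ≤ (f b - f a) / (b - a) :=
      slope_def_field f a b ▸ hf.le_slope_of_hasDerivWithinAt ha hb hab hf'
    linarith [(le_div_iff₀ (sub_pos.2 hab)).1 hslope]
  · simp only [sub_self, mul_zero, add_zero, le_refl]
  · have hslope : (f a - f b) / (a - b) ≤ f' :=
      slope_def_field f b a ▸ hf.slope_le_of_hasDerivWithinAt hb ha hba hf'
    linarith [(div_le_iff₀ (sub_pos.2 hba)).1 hslope]

lemma le_quadratic_of_deriv2_le {s : Set ℝ} {f f' f'' : ℝ → ℝ} {a b K : ℝ} (hs : Convex ℝ s)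
    (hf : ∀ x ∈ s, HasDerivWithinAt f (f' x) s x)
    (hf' : ∀ x ∈ interior s, HasDerivAt f' (f'' x) x)
    (hK : ∀ x ∈ interior s, f'' x ≤ K) (ha : a ∈ s) (hb : b ∈ s) :
    f b ≤ f a + f' a * (b - a) + K / 2 * (b - a) ^ 2 := by
  have hg (x : ℝ) (hx : x ∈ s) :
      HasDerivWithinAt (fun y ↦ K / 2 * y ^ 2 - f y) (K * x - f' x) s x := by
    refine (((hasDerivWithinAt_id x s).pow 2).const_mul (K / 2)).sub (hf x hx) |>.congr_deriv ?_
    simp only [id]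
    ring
  have hg' (x : ℝ) (hx : x ∈ interior s) :
      HasDerivWithinAt (fun y ↦ K * y - f' y) (K - f'' x) (interior s) x :=
    ((hasDerivAt_const_mul K).sub (hf' x hx)).hasDerivWithinAt
  have hconv : ConvexOn ℝ s (fun y ↦ K / 2 * y ^ 2 - f y) :=
    convexOn_of_hasDerivWithinAt2_nonneg hs (fun x hx ↦ (hg x hx).continuousWithinAt)
      (fun x hx ↦ (hg x (interior_subset hx)).mono interior_subset) hg'
      (fun x hx ↦ sub_nonneg.2 (hK x hx))
  linarith [add_deriv_mul_sub_le_of_convexOn hconv ha hb (hg a ha)]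

lemma deriv_deriv_le_sSup_image {s : Set ℝ} {f : ℝ → ℝ} {x : ℝ} (hf : ContDiff ℝ 2 f)
    (hs : IsCompact s) (hx : x ∈ s) : deriv (deriv f) x ≤ sSup (deriv (deriv f) '' s) :=
  have hcont : Continuous (deriv (deriv f)) := (hf.deriv' (n := 1)).continuous_deriv_one
  le_csSup (hs.bddAbove_image hcont.continuousOn) (Set.mem_image_of_mem _ hx)

theorem firstOrder_entropy_stable_general {s : Set ℝ} {U U' U'' : ℝ → ℝ}
    {ubar lam A B FA FB K : ℝ} (hs : Convex ℝ s)
    (hU : ∀ x ∈ s, HasDerivWithinAt U (U' x) s x)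
    (hU' : ∀ x ∈ interior s, HasDerivAt U' (U'' x) x)
    (hK : ∀ x ∈ interior s, U'' x ≤ K)
    (hubar : ubar ∈ s) (huplus : ubar - lam * (A - B) ∈ s) (hlam : 0 ≤ lam)
    (hCFL : lam * K * (A - B) ^ 2 ≤ 2 * (U' ubar * (A - B) - FA + FB)) :
    U (ubar - lam * (A - B)) ≤ U ubar - lam * (FA - FB) :=
  calc U (ubar - lam * (A - B))
    _ ≤ U ubar + U' ubar * (ubar - lam * (A - B) - ubar)
          + K / 2 * (ubar - lam * (A - B) - ubar) ^ 2 :=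
        le_quadratic_of_deriv2_le hs hU hU' hK hubar huplus
    _ = U ubar - lam * (U' ubar * (A - B)) + lam / 2 * (lam * K * (A - B) ^ 2) := by ring
    _ ≤ U ubar - lam * (U' ubar * (A - B))
          + lam / 2 * (2 * (U' ubar * (A - B) - FA + FB)) := by gcongr
    _ = U ubar - lam * (FA - FB) := by ring

/-- Entropy stability of the first-order three-point fully discrete
finite-volume scheme (Lemma 3.1 with the CFL condition of Remark 3.2). -/
theorem firstOrder_entropy_stable
    (U : ℝ → ℝ) (hU : ContDiff ℝ 2 U) (hUconv : ConvexOn ℝ Set.univ U)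
    (fhat Fhat : ℝ × ℝ → ℝ)
    (uL ubar uR lam : ℝ) (hlam : 0 < lam)
    (A B FA FB uplus : ℝ)
    (hA : A = fhat (ubar, uR)) (hB : B = fhat (uL, ubar))
    (hFA : FA = Fhat (ubar, uR)) (hFB : FB = Fhat (uL, ubar))
    (hup : uplus = ubar - lam * (A - B))
    (hCFL : lam * sSup ((deriv (deriv U)) '' Set.Icc (min ubar uplus) (max ubar uplus))
        * (A - B) ^ 2 ≤ 2 * (deriv U ubar * (A - B) - FA + FB)) :
    U uplus ≤ U ubar - lam * (FA - FB) := by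
  subst hup
  exact firstOrder_entropy_stable_general (convex_uIcc ubar (ubar - lam * (A - B)))
    (fun x _ ↦ (hU.differentiable two_ne_zero x).hasDerivAt.hasDerivWithinAt)
    (fun x _ ↦ (hU.differentiable_deriv_two x).hasDerivAt)
    (fun x hx ↦ deriv_deriv_le_sSup_image hU isCompact_uIcc (interior_subset hx))
    Set.left_mem_uIcc Set.right_mem_uIcc hlam.le hCFL
end

section
/- Let f, F, U : ℝ → ℝ be differentiable with F'(u) = U'(u)·f'(u) for all u, and let α ∈ ℝ. Define the Lax–Friedrichs numerical flux f̂(a,b) = ½(f(a) + f(b)) − (α/2)(b − a) and the two-point function F̂(a,b) = ½(F(a) + F(b)) − (α/2)(U(b) − U(a)). Then F̂ is consistent, i.e. F̂(u,u) = F(u) for all u, and for all (a,b) one has ∂F̂/∂a(a,b) = U'(a)·∂f̂/∂a(a,b) and ∂F̂/∂b(a,b) = U'(b)·∂f̂/∂b(a,b); that is, F̂ is a proper numerical entropy flux for f̂. -/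
/-!
For a fixed covector `w`, the relation `dG = w ∘ dg` between maps `g` and `G` is linear in `(g, G)`
and is not affected by constants. With `w = U'(a)` it holds at `a` for `(f, F)` by the entropy-pair
condition and for `(id, U)` trivially. In either argument, the Lax–Friedrichs fluxes of these two
pairs are, up to constants, the same linear combination of `f` and `id` on one side and of `F` and
`U` on the other.
-/

section LaxFriedrichsFlux

variable {𝕜 X E : Type*} [Field 𝕜] [AddCommGroup E] [Module 𝕜 E]

/-- The Lax–Friedrichs two-point flux with central part `g`, dissipated quantity `v` and viscosity
`α`. The numerical flux of `f` is the case `g = f`, `v = id`, and the numerical entropy flux of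
`(U, F)` is the case `g = F`, `v = U`. -/
def laxFriedrichsFlux (α : 𝕜) (g v : X → E) (a b : X) : E :=
  (1 / 2 : 𝕜) • (g a + g b) - (α / 2) • (v b - v a)

theorem laxFriedrichsFlux_self [NeZero (2 : 𝕜)] (α : 𝕜) (g v : X → E) (u : X) :
    laxFriedrichsFlux α g v u u = g u := by
  rw [laxFriedrichsFlux, sub_self, smul_zero, sub_zero, ← two_smul 𝕜, smul_smul,
    one_div_mul_cancel two_ne_zero, one_smul]

theorem laxFriedrichsFlux_swap (α : 𝕜) (g v : X → E) (a b : X) :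
    laxFriedrichsFlux α g v b a = laxFriedrichsFlux (-α) g v a b := by
  simp only [laxFriedrichsFlux]
  module

end LaxFriedrichsFlux

section EntropyFlux

variable {𝕜 : Type*} [NontriviallyNormedField 𝕜]
  {D : Type*} [NormedAddCommGroup D] [NormedSpace 𝕜 D]
  {E : Type*} [NormedAddCommGroup E] [NormedSpace 𝕜 E]
  {H : Type*} [NormedAddCommGroup H] [NormedSpace 𝕜 H]

theorem hasFDerivAt_laxFriedrichsFlux_left {g v : D → E} {g' v' : D →L[𝕜] E} {a : D}
    (hg : HasFDerivAt g g' a) (hv : HasFDerivAt v v' a) (α : 𝕜) (b : D) :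
    HasFDerivAt (fun x => laxFriedrichsFlux α g v x b) ((1 / 2 : 𝕜) • g' + (α / 2) • v') a := by
  have h := ((hg.add_const (g b)).const_smul (1 / 2 : 𝕜)).sub
    ((hv.const_sub (v b)).const_smul (α / 2))
  rwa [smul_neg, sub_neg_eq_add] at h

/-- `G` is an entropy flux for the flux `g` at the point `a`, with entropy variable `w`: both are
differentiable at `a` and `dG = w ∘ dg` there. For an entropy pair `(U, F)` one takes `w = U'(a)`.
The derivative of `g` is quantified, rather than written `fderiv 𝕜 g a`, so that differentiability
is part of the notion. -/
def IsEntropyFluxAt (w : E →L[𝕜] H) (g : D → E) (G : D → H) (a : D) : Prop :=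
  ∃ g' : D →L[𝕜] E, HasFDerivAt g g' a ∧ HasFDerivAt G (w ∘L g') a

namespace IsEntropyFluxAt

theorem of_fderiv_eq {w : E →L[𝕜] H} {g : D → E} {G : D → H} {a : D}
    (hg : DifferentiableAt 𝕜 g a) (hG : DifferentiableAt 𝕜 G a)
    (h : fderiv 𝕜 G a = w ∘L fderiv 𝕜 g a) : IsEntropyFluxAt w g G a :=
  ⟨fderiv 𝕜 g a, hg.hasFDerivAt, h ▸ hG.hasFDerivAt⟩

theorem of_hasFDerivAt {w : E →L[𝕜] H} {U : E → H} {a : E} (hU : HasFDerivAt U w a) :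
    IsEntropyFluxAt w id U a :=
  ⟨.id 𝕜 E, hasFDerivAt_id a, by rwa [ContinuousLinearMap.comp_id]⟩

theorem laxFriedrichsFlux_left {w : E →L[𝕜] H} {g v : D → E} {G V : D → H} {a : D}
    (hg : IsEntropyFluxAt w g G a) (hv : IsEntropyFluxAt w v V a) (α : 𝕜) (b : D) :
    IsEntropyFluxAt w (fun x => laxFriedrichsFlux α g v x b)
      (fun x => laxFriedrichsFlux α G V x b) a := by
  obtain ⟨g', hg', hG'⟩ := hg
  obtain ⟨v', hv', hV'⟩ := hv
  refine ⟨_, hasFDerivAt_laxFriedrichsFlux_left hg' hv' α b, ?_⟩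
  rw [ContinuousLinearMap.comp_add, ContinuousLinearMap.comp_smul, ContinuousLinearMap.comp_smul]
  exact hasFDerivAt_laxFriedrichsFlux_left hG' hV' α b

theorem laxFriedrichsFlux_right {w : E →L[𝕜] H} {g v : D → E} {G V : D → H} {b : D}
    (hg : IsEntropyFluxAt w g G b) (hv : IsEntropyFluxAt w v V b) (α : 𝕜) (a : D) :
    IsEntropyFluxAt w (laxFriedrichsFlux α g v a) (laxFriedrichsFlux α G V a) b := by
  simpa only [← laxFriedrichsFlux_swap] using hg.laxFriedrichsFlux_left hv (-α) a

theorem deriv_eq {U g G : 𝕜 → 𝕜} {u a : 𝕜} (h : IsEntropyFluxAt (fderiv 𝕜 U u) g G a) :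
    deriv G a = deriv U u * deriv g a := by
  obtain ⟨g', hg, hG⟩ := h
  rw [hg.hasDerivAt.deriv, hG.hasDerivAt.deriv, ContinuousLinearMap.comp_apply,
    fderiv_eq_smul_deriv, smul_eq_mul, mul_comm]

end IsEntropyFluxAt

variable (𝕜) in
/-- `Fhat` is a proper numerical entropy flux for the numerical flux `fhat` and the entropy pair
`(U, F)`: it is consistent with `F`, and in each argument it is an entropy flux for `fhat`, with
the entropy variable `U'` taken at that argument. The state space `E` is arbitrary, so systems are
included; `U` is meant to be differentiable. -/
structure IsProperNumericalEntropyFlux (U F : E → H) (fhat : E → E → E) (Fhat : E → E → H) :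
    Prop where
  consistent : ∀ u, Fhat u u = F u
  left : ∀ a b, IsEntropyFluxAt (fderiv 𝕜 U a) (fun x => fhat x b) (fun x => Fhat x b) a
  right : ∀ a b, IsEntropyFluxAt (fderiv 𝕜 U b) (fun y => fhat a y) (fun y => Fhat a y) b

theorem laxFriedrichs_proper_numerical_entropy_flux_general [NeZero (2 : 𝕜)]
    {f : E → E} {F U : E → H}
    (hf : Differentiable 𝕜 f) (hF : Differentiable 𝕜 F) (hU : Differentiable 𝕜 U)
    (hFU : ∀ u, fderiv 𝕜 F u = fderiv 𝕜 U u ∘L fderiv 𝕜 f u) (α : 𝕜) :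
    IsProperNumericalEntropyFlux 𝕜 U F (laxFriedrichsFlux α f id) (laxFriedrichsFlux α F U) := by
  have flux_pair (u : E) : IsEntropyFluxAt (fderiv 𝕜 U u) f F u :=
    .of_fderiv_eq (hf u) (hF u) (hFU u)
  have dissipation_pair (u : E) : IsEntropyFluxAt (fderiv 𝕜 U u) id U u :=
    .of_hasFDerivAt (hU u).hasFDerivAt
  exact {
    consistent := laxFriedrichsFlux_self α F U
    left := fun a b => (flux_pair a).laxFriedrichsFlux_left (dissipation_pair a) α b
    right := fun a b => (flux_pair b).laxFriedrichsFlux_right (dissipation_pair b) α a }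

theorem fderiv_eq_comp_fderiv_of_deriv_eq_mul {F U f : 𝕜 → 𝕜} {u v : 𝕜}
    (h : deriv F u = deriv U v * deriv f u) :
    fderiv 𝕜 F u = fderiv 𝕜 U v ∘L fderiv 𝕜 f u := by
  ext
  rw [ContinuousLinearMap.comp_apply, fderiv_apply_one_eq_deriv, fderiv_apply_one_eq_deriv,
    fderiv_eq_smul_deriv, smul_eq_mul, h, mul_comm]

end EntropyFlux

/-- The Lax–Friedrichs two-point entropy flux is a proper numerical entropy
flux for the Lax–Friedrichs numerical flux (scalar case). -/
theorem laxFriedrichs_proper_numerical_entropy_flux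
    (f F U : ℝ → ℝ)
    (hf : Differentiable ℝ f) (hF : Differentiable ℝ F) (hU : Differentiable ℝ U)
    (hFU : ∀ u, deriv F u = deriv U u * deriv f u)
    (α : ℝ) (fhat Fhat : ℝ → ℝ → ℝ)
    (hfhat : ∀ a b, fhat a b = (1 / 2) * (f a + f b) - (α / 2) * (b - a))
    (hFhat : ∀ a b, Fhat a b = (1 / 2) * (F a + F b) - (α / 2) * (U b - U a)) :
    (∀ u, Fhat u u = F u) ∧
    (∀ a b, deriv (fun x => Fhat x b) a = deriv U a * deriv (fun x => fhat x b) a) ∧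
    (∀ a b, deriv (fun y => Fhat a y) b = deriv U b * deriv (fun y => fhat a y) b) := by
  obtain rfl : fhat = laxFriedrichsFlux α f id := funext₂ hfhat
  obtain rfl : Fhat = laxFriedrichsFlux α F U := funext₂ hFhat
  have h := laxFriedrichs_proper_numerical_entropy_flux_general hf hF hU
    (fun u => fderiv_eq_comp_fderiv_of_deriv_eq_mul (hFU u)) α
  exact ⟨h.consistent, fun a b => (h.left a b).deriv_eq, fun a b => (h.right a b).deriv_eq⟩
end

section
/- Let U : ℝ → ℝ be convex, let N ≥ 2, and let ω_1, …, ω_N > 0 with Σ_{q=1}^N ω_q = 1. Let u_L, u_1, …, u_N, u_R ∈ ℝ, let ū = Σ_{q=1}^N ω_q u_q, and let λ > 0. Let f̂, F̂ : ℝ² → ℝ, write f_mid = f̂(u_1, u_N), f_+ = f̂(u_N, u_R), f_− = f̂(u_L, u_1), F_mid = F̂(u_1, u_N), F_+ = F̂(u_N, u_R), F_− = F̂(u_L, u_1), and define the substeps H_N = u_N − (λ/ω_N)(f_+ − f_mid) and H_1 = u_1 − (λ/ω_1)(f_mid − f_−). If the first-order cell entropy inequalities U(H_N) ≤ U(u_N)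 − (λ/ω_N)(F_+ − F_mid) and U(H_1) ≤ U(u_1) − (λ/ω_1)(F_mid − F_−) hold, then the updated cell average ū⁺ = ū − λ(f_+ − f_−) satisfies the entropy-stable-like inequality U(ū⁺) ≤ Σ_{q=1}^N ω_q U(u_q) − λ(F_+ − F_−). -/
/-!
Split the boundary flux difference `f₊ - f₋ = (f_mid - f₋) + (f₊ - f_mid)` between the two end
nodes. Since `ω_q · (lam / ω_q) = lam`, the updated cell average is then the `ω`-average of nodal
first-order updates, the interior nodes staying put. Jensen's inequality bounds `U` of this average
by the average of the nodal entropies, and the nodal entropy inequalities telescope in the same way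
as the fluxes.
-/

section

variable {𝕜 ι E β : Type*} [Field 𝕜] [AddCommGroup E] [Module 𝕜 E]

theorem sum_smul_sub_div_smul {t : Finset ι} {w : ι → 𝕜} (hw : ∀ i ∈ t, w i ≠ 0)
    (lam : 𝕜) (x g : ι → E) :
    ∑ i ∈ t, w i • (x i - (lam / w i) • g i) = (∑ i ∈ t, w i • x i) - lam • ∑ i ∈ t, g i := by
  rw [Finset.smul_sum, ← Finset.sum_sub_distrib]
  refine Finset.sum_congr rfl fun i hi => ?_
  rw [smul_sub, smul_smul, mul_div_cancel₀ _ (hw i hi)]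

section TwoNodes

variable [DecidableEq ι]

/-- The nodal flux differences of a two-node splitting: the net flux through the cell is carried by
the end nodes `a` and `b`, which exchange the intermediate flux `fmid`, and the remaining nodes
carry none. Meant for `a ≠ b`; at `a = b` the two contributions add up. -/
def twoNodeFluxDiff (a b : ι) (fminus fmid fplus : E) : ι → E :=
  Pi.single a (fmid - fminus) + Pi.single b (fplus - fmid)

variable {a b : ι} (fminus fmid fplus : E)

theorem twoNodeFluxDiff_left (hab : a ≠ b) :
    twoNodeFluxDiff a b fminus fmid fplus a = fmid - fminus := by
  simp [twoNodeFluxDiff, hab]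

theorem twoNodeFluxDiff_right (hab : a ≠ b) :
    twoNodeFluxDiff a b fminus fmid fplus b = fplus - fmid := by
  simp [twoNodeFluxDiff, hab.symm]

theorem twoNodeFluxDiff_of_ne {i : ι} (ha : i ≠ a) (hb : i ≠ b) :
    twoNodeFluxDiff a b fminus fmid fplus i = 0 := by
  simp [twoNodeFluxDiff, ha, hb]

theorem sum_twoNodeFluxDiff [Fintype ι] (a b : ι) (fminus fmid fplus : E) :
    ∑ i, twoNodeFluxDiff a b fminus fmid fplus i = fplus - fminus := by
  simp [twoNodeFluxDiff, Finset.sum_add_distrib]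

end TwoNodes

variable [LinearOrder 𝕜] [IsStrictOrderedRing 𝕜] [AddCommGroup β] [PartialOrder β]
  [IsOrderedAddMonoid β] [Module 𝕜 β] [IsStrictOrderedModule 𝕜 β] {s : Set E} {U : E → β}

theorem map_sum_smul_sub_smul_sum_le_of_convexOn (hU : ConvexOn 𝕜 s U) {t : Finset ι} {w : ι → 𝕜}
    (hw : ∀ i ∈ t, 0 < w i) (hwsum : ∑ i ∈ t, w i = 1) {lam : 𝕜} {u g : ι → E} {G : ι → β}
    (hs : ∀ i ∈ t, u i - (lam / w i) • g i ∈ s)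
    (hES : ∀ i ∈ t, U (u i - (lam / w i) • g i) ≤ U (u i) - (lam / w i) • G i) :
    U ((∑ i ∈ t, w i • u i) - lam • ∑ i ∈ t, g i)
      ≤ (∑ i ∈ t, w i • U (u i)) - lam • ∑ i ∈ t, G i := by
  have hw0 : ∀ i ∈ t, w i ≠ 0 := fun i hi => (hw i hi).ne'
  calc U ((∑ i ∈ t, w i • u i) - lam • ∑ i ∈ t, g i)
      = U (∑ i ∈ t, w i • (u i - (lam / w i) • g i)) := by rw [sum_smul_sub_div_smul hw0]
    _ ≤ ∑ i ∈ t, w i • U (u i - (lam / w i) • g i) :=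
        hU.map_sum_le (fun i hi => (hw i hi).le) hwsum hs
    _ ≤ ∑ i ∈ t, w i • (U (u i) - (lam / w i) • G i) :=
        Finset.sum_le_sum fun i hi => smul_le_smul_of_nonneg_left (hES i hi) (hw i hi).le
    _ = (∑ i ∈ t, w i • U (u i)) - lam • ∑ i ∈ t, G i := sum_smul_sub_div_smul hw0 lam _ G

theorem forwardEuler_DG_ES_like_general [Fintype ι] (hU : ConvexOn 𝕜 s U)
    {ω : ι → 𝕜} (hω : ∀ q, 0 < ω q) (hωsum : ∑ q, ω q = 1) {a b : ι} (hab : a ≠ b)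
    {u : ι → E} (hu : ∀ q, q ≠ a → q ≠ b → u q ∈ s) {lam : 𝕜}
    {fminus fmid fplus : E} {Fminus Fmid Fplus : β}
    (ha : u a - (lam / ω a) • (fmid - fminus) ∈ s)
    (hb : u b - (lam / ω b) • (fplus - fmid) ∈ s)
    (hESa : U (u a - (lam / ω a) • (fmid - fminus)) ≤ U (u a) - (lam / ω a) • (Fmid - Fminus))
    (hESb : U (u b - (lam / ω b) • (fplus - fmid)) ≤ U (u b) - (lam / ω b) • (Fplus - Fmid)) :
    U ((∑ q, ω q • u q) - lam • (fplus - fminus))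
      ≤ (∑ q, ω q • U (u q)) - lam • (Fplus - Fminus) := by
  classical
  rw [← sum_twoNodeFluxDiff a b fminus fmid fplus, ← sum_twoNodeFluxDiff a b Fminus Fmid Fplus]
  refine map_sum_smul_sub_smul_sum_le_of_convexOn hU (fun q _ => hω q) hωsum
    (fun q _ => ?_) (fun q _ => ?_)
  all_goals
    obtain rfl | hqa := eq_or_ne q a
    · simpa only [twoNodeFluxDiff_left _ _ _ hab]
    obtain rfl | hqb := eq_or_ne q b
    · simpa only [twoNodeFluxDiff_right _ _ _ hab]
    simp only [twoNodeFluxDiff_of_ne _ _ _ hqa hqb, smul_zero, sub_zero, hu q hqa hqb, le_refl]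

end

/-- The ES-like property (Theorem 3.3) of the DG scheme with forward Euler
time stepping for scalar conservation laws: the cell-average update satisfies
an entropy-stable-like inequality, given the first-order substep cell entropy
inequalities. -/
theorem forwardEuler_DG_ES_like
    (U : ℝ → ℝ) (hU : ConvexOn ℝ Set.univ U)
    (N : ℕ) (hN : 2 ≤ N)
    (ω : Fin N → ℝ) (hω : ∀ q, 0 < ω q) (hωsum : ∑ q, ω q = 1)
    (uL uR : ℝ) (u : Fin N → ℝ)
    (ubar : ℝ) (hubar : ubar = ∑ q, ω q * u q)
    (lam : ℝ) (hlam : 0 < lam)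
    (fhat Fhat : ℝ → ℝ → ℝ)
    (fmid fplus fminus Fmid Fplus Fminus HN H1 : ℝ)
    (hfmid : fmid = fhat (u ⟨0, by omega⟩) (u ⟨N - 1, by omega⟩))
    (hfplus : fplus = fhat (u ⟨N - 1, by omega⟩) uR)
    (hfminus : fminus = fhat uL (u ⟨0, by omega⟩))
    (hFmid : Fmid = Fhat (u ⟨0, by omega⟩) (u ⟨N - 1, by omega⟩))
    (hFplus : Fplus = Fhat (u ⟨N - 1, by omega⟩) uR)
    (hFminus : Fminus = Fhat uL (u ⟨0, by omega⟩))
    (hHN : HN = u ⟨N - 1, by omega⟩ - (lam / ω ⟨N - 1, by omega⟩) * (fplus - fmid))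
    (hH1 : H1 = u ⟨0, by omega⟩ - (lam / ω ⟨0, by omega⟩) * (fmid - fminus))
    (hESN : U HN ≤ U (u ⟨N - 1, by omega⟩) - (lam / ω ⟨N - 1, by omega⟩) * (Fplus - Fmid))
    (hES1 : U H1 ≤ U (u ⟨0, by omega⟩) - (lam / ω ⟨0, by omega⟩) * (Fmid - Fminus)) :
    U (ubar - lam * (fplus - fminus)) ≤ (∑ q, ω q * U (u q)) - lam * (Fplus - Fminus) := by
  subst hubar hHN hH1
  exact forwardEuler_DG_ES_like_general hU hω hωsum (Fin.ne_of_val_ne (by dsimp only; omega))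
    (fun _ _ _ => trivial) trivial trivial hES1 hESN
end

section
/- Let U : ℝ → ℝ be convex, let N ≥ 1, let ω_1, …, ω_N ≥ 0 with Σ_{q=1}^N ω_q = 1, let u_1, …, u_N ∈ ℝ, and let ū = Σ_{q=1}^N ω_q u_q. Define φ(θ) = Σ_{q=1}^N ω_q U(ū + θ(u_q − ū)). Then φ is continuous on [0,1], φ is non-decreasing on [0,1], φ(0) = U(ū), and φ(1) = Σ_{q=1}^N ω_q U(u_q). -/
/-!
The rescaled entropy `φ` is a nonnegative combination of convex functions composed with affine maps
of `θ`, so it is convex in the single real variable `θ`, hence continuous on open sets. Rescaling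
towards the average keeps the average, so Jensen's inequality gives `φ 0 = U ū ≤ φ θ`; a convex
function of one variable which is minimal at `0` is non-decreasing to the right of `0`.
-/

open Set AffineMap

theorem convexOn_finset_sum {𝕜 E β ι : Type*} [Semiring 𝕜] [PartialOrder 𝕜] [AddCommMonoid E]
    [SMul 𝕜 E] [AddCommMonoid β] [PartialOrder β] [IsOrderedAddMonoid β] [Module 𝕜 β]
    {s : Set E} {t : Finset ι} {f : ι → E → β}
    (hs : Convex 𝕜 s) (hf : ∀ i ∈ t, ConvexOn 𝕜 s (f i)) :
    ConvexOn 𝕜 s (fun x ↦ ∑ i ∈ t, f i x) := by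
  rw [← Finset.sum_fn]
  exact Finset.sum_induction f (ConvexOn 𝕜 s) (fun _ _ ↦ ConvexOn.add) (convexOn_const 0 hs) hf

theorem monotoneOn_inter_Ici_of_convexOn_of_isMinOn {𝕜 β : Type*} [Field 𝕜] [LinearOrder 𝕜]
    [IsStrictOrderedRing 𝕜] [AddCommMonoid β] [LinearOrder β] [IsOrderedCancelAddMonoid β]
    [Module 𝕜 β] [PosSMulStrictMono 𝕜 β] {s : Set 𝕜} {f : 𝕜 → β} {a : 𝕜}
    (hf : ConvexOn 𝕜 s f) (ha : a ∈ s) (hmin : IsMinOn f (s ∩ Ici a) a) :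
    MonotoneOn f (s ∩ Ici a) := by
  intro x hx y hy hxy
  rcases eq_or_lt_of_le hx.2 with rfl | hax
  · exact hmin hy
  · exact hf.le_right_of_left_le'' ha hy.1 hax hxy (hmin hx)

theorem sum_smul_lineMap {R E ι : Type*} [CommRing R] [AddCommGroup E] [Module R E]
    {t : Finset ι} {w : ι → R} (hw : ∑ i ∈ t, w i = 1) (c : E) (u : ι → E) (θ : R) :
    ∑ i ∈ t, w i • lineMap c (u i) θ = lineMap c (∑ i ∈ t, w i • u i) θ := by
  simp only [lineMap_apply_module, smul_add, Finset.sum_add_distrib, ← Finset.sum_smul, hw,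
    one_smul, smul_comm _ θ, ← Finset.smul_sum]

section RescaledEntropy

variable {𝕜 E β ι : Type*} [CommRing 𝕜] [AddCommGroup E] [Module 𝕜 E] [AddCommGroup β] [Module 𝕜 β]

/-- The quadrature entropy `φ(θ) = ∑ ω_q U(c + θ (u_q - c))` of the nodal values `u_q` rescaled
towards `c` by the factor `θ`. The centre `c` is a free parameter; the cell entropy of the paper
is the case where `c` is the cell average `∑ ω_q u_q`. -/
def rescaledEntropy (U : E → β) (t : Finset ι) (ω : ι → 𝕜) (c : E) (u : ι → E) (θ : 𝕜) : β :=
  ∑ q ∈ t, ω q • U (lineMap c (u q) θ)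

variable (𝕜) in
/-- The factors `θ` for which every rescaled nodal value `c + θ (u_q - c)` lies in the set `s` of
admissible states, on which the entropy is convex. -/
def admissibleFactors (s : Set E) (t : Finset ι) (c : E) (u : ι → E) : Set 𝕜 :=
  ⋂ q ∈ t, lineMap c (u q) ⁻¹' s

variable {U : E → β} {s : Set E} {t : Finset ι} {ω : ι → 𝕜} {c : E} {u : ι → E} {θ : 𝕜}

theorem mem_admissibleFactors :
    θ ∈ admissibleFactors 𝕜 s t c u ↔ ∀ q ∈ t, lineMap c (u q) θ ∈ s := by
  simp only [admissibleFactors, mem_iInter₂, mem_preimage]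

theorem rescaledEntropy_zero (hω : ∑ q ∈ t, ω q = 1) : rescaledEntropy U t ω c u 0 = U c := by
  simp only [rescaledEntropy, lineMap_apply_zero, ← Finset.sum_smul, hω, one_smul]

theorem rescaledEntropy_one : rescaledEntropy U t ω c u 1 = ∑ q ∈ t, ω q • U (u q) := by
  simp only [rescaledEntropy, lineMap_apply_one]

theorem sum_smul_lineMap_average (hω : ∑ q ∈ t, ω q = 1) (hc : c = ∑ q ∈ t, ω q • u q) :
    ∑ q ∈ t, ω q • lineMap c (u q) θ = c := by
  rw [sum_smul_lineMap hω, ← hc, lineMap_same_apply]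

end RescaledEntropy

section Convexity

variable {𝕜 E β ι : Type*} [Field 𝕜] [LinearOrder 𝕜] [AddCommGroup E] [Module 𝕜 E]
  [AddCommGroup β] [Module 𝕜 β]
  {U : E → β} {s : Set E} {t : Finset ι} {ω : ι → 𝕜} {c : E} {u : ι → E} {θ : 𝕜}

theorem convex_admissibleFactors (hs : Convex 𝕜 s) : Convex 𝕜 (admissibleFactors 𝕜 s t c u) :=
  convex_iInter₂ fun _ _ ↦ hs.affine_preimage _

theorem convexOn_rescaledEntropy [PartialOrder β] [IsOrderedAddMonoid β] [PosSMulMono 𝕜 β]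
    (hU : ConvexOn 𝕜 s U) (hω₀ : ∀ q ∈ t, 0 ≤ ω q) :
    ConvexOn 𝕜 (admissibleFactors 𝕜 s t c u) (rescaledEntropy U t ω c u) :=
  have hconv := convex_admissibleFactors hU.1
  convexOn_finset_sum hconv fun q hq ↦
    ((hU.comp_affineMap (lineMap c (u q))).subset
      (fun _ hθ ↦ mem_admissibleFactors.1 hθ q hq) hconv).smul (hω₀ q hq)

variable [IsStrictOrderedRing 𝕜]

theorem average_mem_of_mem_admissibleFactors (hs : Convex 𝕜 s) (hω₀ : ∀ q ∈ t, 0 ≤ ω q)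
    (hω : ∑ q ∈ t, ω q = 1) (hc : c = ∑ q ∈ t, ω q • u q)
    (hθ : θ ∈ admissibleFactors 𝕜 s t c u) : c ∈ s := by
  rw [← sum_smul_lineMap_average (θ := θ) hω hc]
  exact hs.sum_mem hω₀ hω (mem_admissibleFactors.1 hθ)

theorem Icc_subset_admissibleFactors (hs : Convex 𝕜 s) (hc : c ∈ s) (hu : ∀ q ∈ t, u q ∈ s) :
    Icc 0 1 ⊆ admissibleFactors 𝕜 s t c u :=
  fun _ hθ ↦ mem_admissibleFactors.2 fun q hq ↦ hs.lineMap_mem hc (hu q hq) hθ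

theorem le_rescaledEntropy [PartialOrder β] [IsOrderedAddMonoid β] [IsStrictOrderedModule 𝕜 β]
    (hU : ConvexOn 𝕜 s U) (hω₀ : ∀ q ∈ t, 0 ≤ ω q) (hω : ∑ q ∈ t, ω q = 1)
    (hc : c = ∑ q ∈ t, ω q • u q) (hθ : θ ∈ admissibleFactors 𝕜 s t c u) :
    U c ≤ rescaledEntropy U t ω c u θ :=
  calc
    U c = U (∑ q ∈ t, ω q • lineMap c (u q) θ) := by rw [sum_smul_lineMap_average hω hc]
    _ ≤ ∑ q ∈ t, ω q • U (lineMap c (u q) θ) := hU.map_sum_le hω₀ hω (mem_admissibleFactors.1 hθ)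

theorem monotoneOn_rescaledEntropy [LinearOrder β] [IsOrderedAddMonoid β]
    [IsStrictOrderedModule 𝕜 β] (hU : ConvexOn 𝕜 s U) (hω₀ : ∀ q ∈ t, 0 ≤ ω q)
    (hω : ∑ q ∈ t, ω q = 1) (hc : c = ∑ q ∈ t, ω q • u q) :
    MonotoneOn (rescaledEntropy U t ω c u) (admissibleFactors 𝕜 s t c u ∩ Ici 0) := by
  intro x hx
  have hcs : c ∈ s := average_mem_of_mem_admissibleFactors hU.1 hω₀ hω hc hx.1
  have hzero : (0 : 𝕜) ∈ admissibleFactors 𝕜 s t c u :=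
    mem_admissibleFactors.2 fun q _ ↦ by rwa [lineMap_apply_zero]
  have hmin : IsMinOn (rescaledEntropy U t ω c u) (admissibleFactors 𝕜 s t c u ∩ Ici 0) 0 :=
    fun θ hθ ↦ (rescaledEntropy_zero hω).trans_le (le_rescaledEntropy hU hω₀ hω hc hθ.1)
  exact monotoneOn_inter_Ici_of_convexOn_of_isMinOn (convexOn_rescaledEntropy hU hω₀) hzero hmin hx

end Convexity

section Continuity

variable {E ι : Type*} [AddCommGroup E] [Module ℝ E] [TopologicalSpace E]
  [IsTopologicalAddGroup E] [ContinuousSMul ℝ E]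
  {U : E → ℝ} {s : Set E} {t : Finset ι} {ω : ι → ℝ} {c : E} {u : ι → E}

theorem isOpen_admissibleFactors (hs : IsOpen s) : IsOpen (admissibleFactors ℝ s t c u) :=
  isOpen_biInter_finset fun _ _ ↦ hs.preimage lineMap_continuous

theorem continuousOn_rescaledEntropy (hs : IsOpen s) (hU : ConvexOn ℝ s U)
    (hω₀ : ∀ q ∈ t, 0 ≤ ω q) :
    ContinuousOn (rescaledEntropy U t ω c u) (admissibleFactors ℝ s t c u) :=
  (convexOn_rescaledEntropy hU hω₀).continuousOn (isOpen_admissibleFactors hs)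

theorem rescaled_cell_entropy_monotone_general (hs : IsOpen s) (hU : ConvexOn ℝ s U)
    (hω₀ : ∀ q ∈ t, 0 ≤ ω q) (hω : ∑ q ∈ t, ω q = 1) (hu : ∀ q ∈ t, u q ∈ s)
    (hc : c = ∑ q ∈ t, ω q • u q) :
    ContinuousOn (rescaledEntropy U t ω c u) (Icc 0 1) ∧
    MonotoneOn (rescaledEntropy U t ω c u) (Icc 0 1) ∧
    rescaledEntropy U t ω c u 0 = U c ∧
    rescaledEntropy U t ω c u 1 = ∑ q ∈ t, ω q • U (u q) := by
  have hcs : c ∈ s := hc ▸ hU.1.sum_mem hω₀ hω hu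
  have hIcc : Icc 0 1 ⊆ admissibleFactors ℝ s t c u := Icc_subset_admissibleFactors hU.1 hcs hu
  exact ⟨(continuousOn_rescaledEntropy hs hU hω₀).mono hIcc,
    (monotoneOn_rescaledEntropy hU hω₀ hω hc).mono (subset_inter hIcc Icc_subset_Ici_self),
    rescaledEntropy_zero hω, rescaledEntropy_one⟩

end Continuity

/-- Proposition 3.6: the rescaled quadrature cell entropy φ(θ) is a
continuous, non-decreasing function on [0,1] with φ(0) = U(ū) and
φ(1) = Σ_q ω_q U(u_q). -/
theorem rescaled_cell_entropy_monotone
    (U : ℝ → ℝ) (hU : ConvexOn ℝ Set.univ U)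
    (N : ℕ) (hN : 1 ≤ N)
    (ω : Fin N → ℝ) (hω : ∀ q, 0 ≤ ω q) (hωsum : ∑ q, ω q = 1)
    (u : Fin N → ℝ) (ubar : ℝ) (hubar : ubar = ∑ q, ω q * u q)
    (φ : ℝ → ℝ) (hφ : ∀ θ, φ θ = ∑ q, ω q * U (ubar + θ * (u q - ubar))) :
    ContinuousOn φ (Set.Icc (0 : ℝ) 1) ∧
    MonotoneOn φ (Set.Icc (0 : ℝ) 1) ∧
    φ 0 = U ubar ∧
    φ 1 = ∑ q, ω q * U (u q) := by
  obtain rfl : φ = rescaledEntropy U Finset.univ ω ubar u := by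
    ext θ
    simp only [hφ, rescaledEntropy, lineMap_apply_module', smul_eq_mul, add_comm]
  exact rescaled_cell_entropy_monotone_general isOpen_univ hU (fun q _ ↦ hω q) hωsum
    (fun q _ ↦ mem_univ (u q)) hubar
end

section
/- Let U : ℝ → ℝ be twice continuously differentiable with U''(x) ≥ m for all x, where m > 0. Let N ≥ 1, let ω_1, …, ω_N > 0 with Σ_{q=1}^N ω_q = 1, and set ω_min = min_q ω_q. Let u_1, …, u_N ∈ ℝ, ū = Σ_{q=1}^N ω_q u_q, U¹ˢᵗ = U(ū), Uʰⁱᵍʰ = Σ_{q=1}^N ω_q U(u_q), and let Uᵘᵖ ∈ ℝ satisfy U¹ˢᵗ ≤ Uᵘᵖ < Uʰⁱᵍʰ. Define θ = (Uᵘᵖ − U¹ˢᵗ)/(Uʰⁱᵍʰ − U¹ˢᵗ). Then (1 − θ) · (max_{1 ≤ q ≤ N} |u_q − ū|)² ≤ (2/(m · ω_min)) · (Uʰⁱᵍʰ − Uᵘᵖ). -/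
/-!
An `m`-strongly convex function is a convex function plus `m / 2 * ‖x‖ ^ 2`, so Jensen's inequality
for the convex part bounds the Jensen gap of `U` below by `m / 2` times the weighted variance of the
nodes. The node furthest from the mean alone contributes at least `ωmin * max ‖u q - ubar‖ ^ 2` to
that variance. Multiplying by `1 - θ`, the ratio of `Uhigh - Uup` to the Jensen gap, finishes.
-/

section StrongConvexity

theorem strongConvexOn_of_hasDerivWithinAt2_ge {D : Set ℝ} (hD : Convex ℝ D) {m : ℝ}
    {f f' f'' : ℝ → ℝ} (hf : ContinuousOn f D)
    (hf' : ∀ x ∈ interior D, HasDerivWithinAt f (f' x) (interior D) x)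
    (hf'' : ∀ x ∈ interior D, HasDerivWithinAt f' (f'' x) (interior D) x)
    (hm : ∀ x ∈ interior D, m ≤ f'' x) : StrongConvexOn D m f := by
  simp only [strongConvexOn_iff_convex, Real.norm_eq_abs, sq_abs]
  refine convexOn_of_hasDerivWithinAt2_nonneg hD (f' := fun x ↦ f' x - m * x)
    (f'' := fun x ↦ f'' x - m) (by fun_prop) (fun x hx ↦ ?_) (fun x hx ↦ ?_)
    (fun x hx ↦ sub_nonneg.mpr (hm x hx))
  · refine ((hf' x hx).sub (((hasDerivWithinAt_id x _).pow 2).const_mul (m / 2))).congr_deriv ?_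
    simp only [id_eq]
    ring
  · simpa only [mul_one] using! (hf'' x hx).sub ((hasDerivWithinAt_id x _).const_mul m)

theorem strongConvexOn_univ_of_le_deriv_deriv {m : ℝ} {f : ℝ → ℝ} (hf : Differentiable ℝ f)
    (hf' : Differentiable ℝ (deriv f)) (hm : ∀ x, m ≤ deriv (deriv f) x) :
    StrongConvexOn Set.univ m f :=
  strongConvexOn_of_hasDerivWithinAt2_ge convex_univ hf.continuous.continuousOn
    (fun x _ ↦ (hf x).hasDerivAt.hasDerivWithinAt)
    (fun x _ ↦ (hf' x).hasDerivAt.hasDerivWithinAt) (fun x _ ↦ hm x)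

end StrongConvexity

section WeightedSums

variable {ι : Type*} {t : Finset ι}

theorem inf'_mul_sup'_pow_le_sum_mul_pow {R : Type*} [Semiring R] [LinearOrder R]
    [IsOrderedRing R] (ht : t.Nonempty) {w a : ι → R} (hw : ∀ i ∈ t, 0 ≤ w i)
    (ha : ∀ i ∈ t, 0 ≤ a i) (n : ℕ) :
    t.inf' ht w * t.sup' ht a ^ n ≤ ∑ i ∈ t, w i * a i ^ n := by
  obtain ⟨j, hj, hsup⟩ := t.exists_mem_eq_sup' ht a
  calc t.inf' ht w * t.sup' ht a ^ n = t.inf' ht w * a j ^ n := by rw [hsup]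
    _ ≤ w j * a j ^ n :=
      mul_le_mul_of_nonneg_right (t.inf'_le w hj) (pow_nonneg (ha j hj) n)
    _ ≤ ∑ i ∈ t, w i * a i ^ n :=
      Finset.single_le_sum (f := fun i ↦ w i * a i ^ n)
        (fun i hi ↦ mul_nonneg (hw i hi) (pow_nonneg (ha i hi) n)) hj

variable {E : Type*} [NormedAddCommGroup E] [InnerProductSpace ℝ E] {w : ι → ℝ} {x : ι → E}

theorem sum_mul_norm_sub_sum_smul_sq (hw : ∑ i ∈ t, w i = 1) :
    ∑ i ∈ t, w i * ‖x i - ∑ j ∈ t, w j • x j‖ ^ 2 =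
      ∑ i ∈ t, w i * ‖x i‖ ^ 2 - ‖∑ i ∈ t, w i • x i‖ ^ 2 := by
  set c := ∑ i ∈ t, w i • x i with hc
  have cross : ∑ i ∈ t, w i * inner ℝ (x i) c = ‖c‖ ^ 2 := by
    simp only [← real_inner_smul_left, ← sum_inner, ← hc, real_inner_self_eq_norm_sq]
  calc ∑ i ∈ t, w i * ‖x i - c‖ ^ 2
      = ∑ i ∈ t, (w i * ‖x i‖ ^ 2 - 2 * (w i * inner ℝ (x i) c) + w i * ‖c‖ ^ 2) :=
        Finset.sum_congr rfl fun i _ ↦ by rw [norm_sub_sq_real]; ring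
    _ = ∑ i ∈ t, w i * ‖x i‖ ^ 2 - 2 * ∑ i ∈ t, w i * inner ℝ (x i) c
          + (∑ i ∈ t, w i) * ‖c‖ ^ 2 := by
        rw [Finset.sum_add_distrib, Finset.sum_sub_distrib, Finset.mul_sum, Finset.sum_mul]
    _ = ∑ i ∈ t, w i * ‖x i‖ ^ 2 - ‖c‖ ^ 2 := by rw [cross, hw]; ring

variable {s : Set E} {m : ℝ} {f : E → ℝ}

theorem half_mul_sum_mul_norm_sub_sq_le_jensen_gap (hf : StrongConvexOn s m f)
    (hw₀ : ∀ i ∈ t, 0 ≤ w i) (hw₁ : ∑ i ∈ t, w i = 1) (hx : ∀ i ∈ t, x i ∈ s) :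
    m / 2 * ∑ i ∈ t, w i * ‖x i - ∑ j ∈ t, w j • x j‖ ^ 2 ≤
      ∑ i ∈ t, w i * f (x i) - f (∑ i ∈ t, w i • x i) := by
  have jensen := (strongConvexOn_iff_convex.mp hf).map_sum_le hw₀ hw₁ hx
  simp only [smul_eq_mul, mul_sub, mul_left_comm (w _) (m / 2), Finset.sum_sub_distrib,
    ← Finset.mul_sum] at jensen
  rw [sum_mul_norm_sub_sum_smul_sq hw₁]
  linarith

theorem half_mul_inf'_mul_sup'_norm_sub_sq_le_jensen_gap (ht : t.Nonempty) (hm : 0 ≤ m)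
    (hf : StrongConvexOn s m f) (hw₀ : ∀ i ∈ t, 0 ≤ w i) (hw₁ : ∑ i ∈ t, w i = 1)
    (hx : ∀ i ∈ t, x i ∈ s) :
    m / 2 * (t.inf' ht w * t.sup' ht (fun i ↦ ‖x i - ∑ j ∈ t, w j • x j‖) ^ 2) ≤
      ∑ i ∈ t, w i * f (x i) - f (∑ i ∈ t, w i • x i) :=
  (mul_le_mul_of_nonneg_left
    (inf'_mul_sup'_pow_le_sum_mul_pow ht hw₀ (fun _ _ ↦ norm_nonneg _) 2)
    (div_nonneg hm zero_le_two)).trans (half_mul_sum_mul_norm_sub_sq_le_jensen_gap hf hw₀ hw₁ hx)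

end WeightedSums

theorem ES_limiter_modification_bound_general
    {E : Type*} [NormedAddCommGroup E] [InnerProductSpace ℝ E] {s : Set E}
    {U : E → ℝ} {m : ℝ} (hm : 0 < m) (hU : StrongConvexOn s m U)
    {ι : Type*} {t : Finset ι} (ht : t.Nonempty)
    {ω : ι → ℝ} (hω : ∀ q ∈ t, 0 < ω q) (hωsum : ∑ q ∈ t, ω q = 1)
    {ωmin : ℝ} (hωmin : ωmin = t.inf' ht ω)
    {u : ι → E} (hu : ∀ q ∈ t, u q ∈ s) {ubar : E} (hubar : ubar = ∑ q ∈ t, ω q • u q)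
    {U1st Uhigh Uup : ℝ} (hU1st : U1st = U ubar) (hUhigh : Uhigh = ∑ q ∈ t, ω q * U (u q))
    (hgap : U1st < Uhigh) (hle : Uup ≤ Uhigh)
    {θ : ℝ} (hθ : θ = (Uup - U1st) / (Uhigh - U1st)) :
    (1 - θ) * t.sup' ht (fun q ↦ ‖u q - ubar‖) ^ 2 ≤ 2 / (m * ωmin) * (Uhigh - Uup) := by
  have hωmin_pos : 0 < ωmin := hωmin ▸ (Finset.lt_inf'_iff ht).mpr hω
  have hgap_pos : 0 < Uhigh - U1st := sub_pos.mpr hgap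
  have one_sub_θ : 1 - θ = (Uhigh - Uup) / (Uhigh - U1st) := by
    rw [hθ, one_sub_div hgap_pos.ne', sub_sub_sub_cancel_right]
  have one_sub_θ_nonneg : 0 ≤ 1 - θ := one_sub_θ ▸ div_nonneg (sub_nonneg.mpr hle) hgap_pos.le
  have sup_sq_le : t.sup' ht (fun q ↦ ‖u q - ubar‖) ^ 2 ≤ 2 / (m * ωmin) * (Uhigh - U1st) := by
    have key := half_mul_inf'_mul_sup'_norm_sub_sq_le_jensen_gap ht hm.le hU
      (fun q hq ↦ (hω q hq).le) hωsum hu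
    rw [← hubar, ← hωmin, ← hUhigh, ← hU1st] at key
    rw [div_mul_eq_mul_div, le_div_iff₀ (mul_pos hm hωmin_pos)]
    linarith
  calc (1 - θ) * t.sup' ht (fun q ↦ ‖u q - ubar‖) ^ 2
      ≤ (1 - θ) * (2 / (m * ωmin) * (Uhigh - U1st)) :=
        mul_le_mul_of_nonneg_left sup_sq_le one_sub_θ_nonneg
    _ = 2 / (m * ωmin) * (Uhigh - Uup) := by
        rw [one_sub_θ, mul_left_comm, div_mul_cancel₀ _ hgap_pos.ne']

/-- Node-value form of Theorem 3.15(1): the modification introduced by the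
entropy-stable limiter is controlled by the entropy gap U^high − U^up. -/
theorem ES_limiter_modification_bound
    (U : ℝ → ℝ) (hU : ContDiff ℝ 2 U)
    (m : ℝ) (hm : 0 < m) (hU'' : ∀ x, m ≤ deriv (deriv U) x)
    (N : ℕ) (hN : 1 ≤ N)
    (ω : Fin N → ℝ) (hω : ∀ q, 0 < ω q) (hωsum : ∑ q, ω q = 1)
    (ωmin : ℝ)
    (hωmin : ωmin = Finset.univ.inf' (Finset.univ_nonempty_iff.mpr ⟨(⟨0, hN⟩ : Fin N)⟩) ω)
    (u : Fin N → ℝ) (ubar : ℝ) (hubar : ubar = ∑ q, ω q * u q)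
    (U1st Uhigh Uup : ℝ)
    (hU1st : U1st = U ubar) (hUhigh : Uhigh = ∑ q, ω q * U (u q))
    (hle : U1st ≤ Uup) (hlt : Uup < Uhigh)
    (θ : ℝ) (hθ : θ = (Uup - U1st) / (Uhigh - U1st)) :
    (1 - θ) *
      (Finset.univ.sup' (Finset.univ_nonempty_iff.mpr ⟨(⟨0, hN⟩ : Fin N)⟩)
        (fun q => |u q - ubar|)) ^ 2 ≤
      (2 / (m * ωmin)) * (Uhigh - Uup) :=
  ES_limiter_modification_bound_general hm
    (strongConvexOn_univ_of_le_deriv_deriv (hU.differentiable two_ne_zero)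
      hU.differentiable_deriv_two hU'')
    _ (fun q _ ↦ hω q) hωsum hωmin (fun _ _ ↦ Set.mem_univ _) hubar hU1st hUhigh
    (hle.trans_lt hlt) hlt.le hθ
end

section
/- Let U : ℝ → ℝ be differentiable and convex (so that U' is non-decreasing). Let f̂ : ℝ² → ℝ be continuously differentiable with ∂f̂/∂u⁻(a,b) ≥ 0 and ∂f̂/∂u⁺(a,b) ≤ 0 for all (a,b), and let F̂ : ℝ² → ℝ be continuously differentiable with ∂F̂/∂u⁻(a,b) = U'(a)·∂f̂/∂u⁻(a,b) and ∂F̂/∂u⁺(a,b) = U'(b)·∂f̂/∂u⁺(a,b) for all (a,b). Then for all u, v, w ∈ ℝ: U'(u)·(f̂(u,w) − f̂(v,u)) − F̂(u,w) + F̂(v,u) ≥ 0. -/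
/-!
Fix `u`. The derivative of `x ↦ F̂(x, u) - U'(u) f̂(x, u)` is `(U'(x) - U'(u)) ∂₁f̂(x, u)`. It is
nonpositive for `x < u` and nonnegative for `x > u`, since `U'` and `f̂(·, u)` are non-decreasing,
so the function is minimal at `x = u`. In the same way `y ↦ F̂(u, y) - U'(u) f̂(u, y)` is maximal
at `y = u`, since `f̂(u, ·)` is non-increasing. Both functions have the value
`F̂(u, u) - U'(u) f̂(u, u)` there, so the value of the first at `v` is at least that of the second
at `w`.
-/

theorem isMinOn_of_hasDerivWithinAt_nonpos_nonneg {s : Set ℝ} (hs : Convex ℝ s) {g g' : ℝ → ℝ}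
    {u : ℝ} (hu : u ∈ s) (hg : ∀ x ∈ s, HasDerivWithinAt g (g' x) s x)
    (hleft : ∀ x ∈ s, x < u → g' x ≤ 0) (hright : ∀ x ∈ s, u < x → 0 ≤ g' x) :
    IsMinOn g s u := by
  have hcont : ContinuousOn g s := fun x hx => (hg x hx).continuousWithinAt
  have hderiv : ∀ t ⊆ s, ∀ x ∈ interior t, HasDerivWithinAt g (g' x) (interior t) x :=
    fun t ht x hx => (hg x (ht (interior_subset hx))).mono (interior_subset.trans ht)
  have hanti : AntitoneOn g (s ∩ Set.Iic u) := by
    refine antitoneOn_of_hasDerivWithinAt_nonpos (hs.inter (convex_Iic u))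
      (hcont.mono Set.inter_subset_left) (hderiv _ Set.inter_subset_left) fun x hx => ?_
    rw [interior_inter, interior_Iic] at hx
    exact hleft x (interior_subset hx.1) hx.2
  have hmono : MonotoneOn g (s ∩ Set.Ici u) := by
    refine monotoneOn_of_hasDerivWithinAt_nonneg (hs.inter (convex_Ici u))
      (hcont.mono Set.inter_subset_left) (hderiv _ Set.inter_subset_left) fun x hx => ?_
    rw [interior_inter, interior_Ici] at hx
    exact hright x (interior_subset hx.1) hx.2
  intro x hx
  rcases le_total x u with hxu | hux
  · exact hanti ⟨hx, hxu⟩ ⟨hu, Set.self_mem_Iic⟩ hxu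
  · exact hmono ⟨hu, Set.self_mem_Ici⟩ ⟨hx, hux⟩ hux

section MonotoneWeight

variable {s : Set ℝ} {η g g' G : ℝ → ℝ} {u v : ℝ}

theorem mul_sub_le_sub_of_hasDerivWithinAt_nonneg (hs : Convex ℝ s) (hη : MonotoneOn η s)
    (hg : ∀ x ∈ s, HasDerivWithinAt g (g' x) s x) (hg' : ∀ x ∈ s, 0 ≤ g' x)
    (hG : ∀ x ∈ s, HasDerivWithinAt G (η x * g' x) s x) (hu : u ∈ s) (hv : v ∈ s) :
    η u * (g v - g u) ≤ G v - G u := by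
  have hderiv : ∀ x ∈ s,
      HasDerivWithinAt (fun x => G x - η u * g x) ((η x - η u) * g' x) s x := fun x hx => by
    simpa only [sub_mul] using (hG x hx).fun_sub ((hg x hx).const_mul (η u))
  have hmin : IsMinOn (fun x => G x - η u * g x) s u :=
    isMinOn_of_hasDerivWithinAt_nonpos_nonneg hs hu hderiv
      (fun x hx hxu =>
        mul_nonpos_of_nonpos_of_nonneg (sub_nonpos.2 (hη hx hu hxu.le)) (hg' x hx))
      (fun x hx hux => mul_nonneg (sub_nonneg.2 (hη hu hx hux.le)) (hg' x hx))
  have hle : G u - η u * g u ≤ G v - η u * g v := hmin hv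
  linarith

theorem sub_le_mul_sub_of_hasDerivWithinAt_nonpos (hs : Convex ℝ s) (hη : MonotoneOn η s)
    (hg : ∀ x ∈ s, HasDerivWithinAt g (g' x) s x) (hg' : ∀ x ∈ s, g' x ≤ 0)
    (hG : ∀ x ∈ s, HasDerivWithinAt G (η x * g' x) s x) (hu : u ∈ s) (hv : v ∈ s) :
    G v - G u ≤ η u * (g v - g u) := by
  have hneg : η u * (-g v - -g u) ≤ -G v - -G u :=
    mul_sub_le_sub_of_hasDerivWithinAt_nonneg hs hη (fun x hx => (hg x hx).fun_neg)
      (fun x hx => neg_nonneg.2 (hg' x hx))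
      (fun x hx => by simpa only [mul_neg] using (hG x hx).fun_neg) hu hv
  linarith

end MonotoneWeight

section PartialDerivatives

variable {𝕜 E F G : Type*} [NontriviallyNormedField 𝕜]
  [NormedAddCommGroup E] [NormedSpace 𝕜 E] [NormedAddCommGroup F] [NormedSpace 𝕜 F]
  [NormedAddCommGroup G] [NormedSpace 𝕜 G] {f : E → F → G} {a : E} {b : F}

theorem differentiableAt_left_of_uncurry
    (hf : DifferentiableAt 𝕜 (Function.uncurry f) (a, b)) :
    DifferentiableAt 𝕜 (fun x => f x b) a :=
  hf.comp (f := fun x => (x, b)) a (differentiableAt_id.prodMk (differentiableAt_const b))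

theorem differentiableAt_right_of_uncurry
    (hf : DifferentiableAt 𝕜 (Function.uncurry f) (a, b)) :
    DifferentiableAt 𝕜 (fun y => f a y) b :=
  hf.comp (f := fun y => (a, y)) b ((differentiableAt_const a).prodMk differentiableAt_id)

end PartialDerivatives

/-- Here `η` stands for `U'`; a convex entropy that is not differentiable enters through a selection
of its subdifferential. -/
theorem CFL_numerator_nonneg_general {s : Set ℝ} (hs : Convex ℝ s)
    {η : ℝ → ℝ} (hη : MonotoneOn η s) {f f₁ f₂ F : ℝ → ℝ → ℝ}
    (hf₁ : ∀ a ∈ s, ∀ b ∈ s, HasDerivWithinAt (fun x => f x b) (f₁ a b) s a)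
    (hf₂ : ∀ a ∈ s, ∀ b ∈ s, HasDerivWithinAt (fun y => f a y) (f₂ a b) s b)
    (hf₁_nonneg : ∀ a ∈ s, ∀ b ∈ s, 0 ≤ f₁ a b)
    (hf₂_nonpos : ∀ a ∈ s, ∀ b ∈ s, f₂ a b ≤ 0)
    (hF₁ : ∀ a ∈ s, ∀ b ∈ s, HasDerivWithinAt (fun x => F x b) (η a * f₁ a b) s a)
    (hF₂ : ∀ a ∈ s, ∀ b ∈ s, HasDerivWithinAt (fun y => F a y) (η b * f₂ a b) s b)
    {u v w : ℝ} (hu : u ∈ s) (hv : v ∈ s) (hw : w ∈ s) :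
    0 ≤ η u * (f u w - f v u) - F u w + F v u := by
  have hleft : η u * (f v u - f u u) ≤ F v u - F u u :=
    mul_sub_le_sub_of_hasDerivWithinAt_nonneg hs hη (fun x hx => hf₁ x hx u hu)
      (fun x hx => hf₁_nonneg x hx u hu) (fun x hx => hF₁ x hx u hu) hu hv
  have hright : F u w - F u u ≤ η u * (f u w - f u u) :=
    sub_le_mul_sub_of_hasDerivWithinAt_nonpos hs hη (hf₂ u hu) (hf₂_nonpos u hu) (hF₂ u hu) hu hw
  linarith

/-- Non-negativity of the numerator of the CFL conditions: for a monotone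
numerical flux f̂ and an associated proper numerical entropy flux F̂ of a
convex entropy U, the local entropy production term is non-negative. -/
theorem CFL_numerator_nonneg
    (U : ℝ → ℝ) (hUdiff : Differentiable ℝ U) (hUconv : ConvexOn ℝ Set.univ U)
    (fhat : ℝ → ℝ → ℝ) (hf : ContDiff ℝ 1 (Function.uncurry fhat))
    (hf1 : ∀ a b, 0 ≤ deriv (fun x => fhat x b) a)
    (hf2 : ∀ a b, deriv (fun y => fhat a y) b ≤ 0)
    (Fhat : ℝ → ℝ → ℝ) (hF : ContDiff ℝ 1 (Function.uncurry Fhat))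
    (hF1 : ∀ a b, deriv (fun x => Fhat x b) a = deriv U a * deriv (fun x => fhat x b) a)
    (hF2 : ∀ a b, deriv (fun y => Fhat a y) b = deriv U b * deriv (fun y => fhat a y) b) :
    ∀ u v w : ℝ,
      0 ≤ deriv U u * (fhat u w - fhat v u) - Fhat u w + Fhat v u := by
  have hf' := hf.differentiable one_ne_zero
  have hF' := hF.differentiable one_ne_zero
  exact fun u v w => CFL_numerator_nonneg_general convex_univ
    (hUconv.monotoneOn_deriv fun x _ => hUdiff x)
    (fun a _ b _ => (differentiableAt_left_of_uncurry (hf' (a, b))).hasDerivAt.hasDerivWithinAt)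
    (fun a _ b _ => (differentiableAt_right_of_uncurry (hf' (a, b))).hasDerivAt.hasDerivWithinAt)
    (fun a _ b _ => hf1 a b) (fun a _ b _ => hf2 a b)
    (fun a _ b _ => hF1 a b ▸
      (differentiableAt_left_of_uncurry (hF' (a, b))).hasDerivAt.hasDerivWithinAt)
    (fun a _ b _ => hF2 a b ▸
      (differentiableAt_right_of_uncurry (hF' (a, b))).hasDerivAt.hasDerivWithinAt)
    (Set.mem_univ u) (Set.mem_univ v) (Set.mem_univ w)
end

section
/- Let E be a real vector space, let U : E → ℝ be convex, let N ≥ 1, let ω_1, …, ω_N ≥ 0 with Σ_{q=1}^N ω_q = 1, let u_1, …, u_N ∈ E, and let ū = Σ_{q=1}^N ω_q u_q. Set U¹ˢᵗ = U(ū) and Uʰⁱᵍʰ = Σ_{q=1}^N ω_q U(u_q), and let Uᵘᵖ ∈ ℝ satisfy U¹ˢᵗ ≤ Uᵘᵖ. Assume U¹ˢᵗ < Uʰⁱᵍʰ and define θ = min{(Uᵘᵖ − U¹ˢᵗ)/(Uʰⁱᵍʰ − U¹ˢᵗ), 1}. Then 0 ≤ θ ≤ 1 and Σ_{q=1}^N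 ω_q U(ū + θ·(u_q − ū)) ≤ Uᵘᵖ. -/
/-!
By convexity, `U` at a point of the segment from the centre `c` to `u q` is at most the linear
interpolation of its end values, so averaging bounds the limited entropy by `Uc + θ * (Uhigh - Uc)`.
The limiter takes the largest `θ ∈ [0, 1]` for which this bound does not exceed `Uup`.
-/

section ScalingTowardsPoint

variable {𝕜 E β : Type*} [PartialOrder 𝕜] [AddCommGroup E] [AddCommGroup β] [PartialOrder β]
  {s : Set E} {f : E → β} {θ : 𝕜}

theorem map_add_smul_sub_le_of_convexOn [Ring 𝕜] [IsOrderedAddMonoid 𝕜] [Module 𝕜 E] [Module 𝕜 β]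
    (hf : ConvexOn 𝕜 s f) {x y : E} (hx : x ∈ s) (hy : y ∈ s) (hθ₀ : 0 ≤ θ) (hθ₁ : θ ≤ 1) :
    f (x + θ • (y - x)) ≤ f x + θ • (f y - f x) := by
  rw [add_comm x, add_comm (f x), ← AffineMap.lineMap_apply_module',
    ← AffineMap.lineMap_apply_module', AffineMap.lineMap_apply_module,
    AffineMap.lineMap_apply_module]
  exact hf.2 hx hy (sub_nonneg.mpr hθ₁) hθ₀ (sub_add_cancel 1 θ)

theorem sum_smul_map_add_smul_sub_le_of_convexOn [CommRing 𝕜] [IsOrderedAddMonoid 𝕜] [Module 𝕜 E]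
    [IsOrderedAddMonoid β] [Module 𝕜 β] [PosSMulMono 𝕜 β] {ι : Type*} {t : Finset ι} {w : ι → 𝕜}
    {p : ι → E} {x : E} (hf : ConvexOn 𝕜 s f) (hw₀ : ∀ i ∈ t, 0 ≤ w i) (hw₁ : ∑ i ∈ t, w i = 1)
    (hp : ∀ i ∈ t, p i ∈ s) (hx : x ∈ s) (hθ₀ : 0 ≤ θ) (hθ₁ : θ ≤ 1) :
    ∑ i ∈ t, w i • f (x + θ • (p i - x)) ≤ f x + θ • (∑ i ∈ t, w i • f (p i) - f x) :=
  calc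
    ∑ i ∈ t, w i • f (x + θ • (p i - x))
      ≤ ∑ i ∈ t, w i • (f x + θ • (f (p i) - f x)) :=
        Finset.sum_le_sum fun i hi ↦ smul_le_smul_of_nonneg_left
          (map_add_smul_sub_le_of_convexOn hf hx (hp i hi) hθ₀ hθ₁) (hw₀ i hi)
    _ = f x + θ • (∑ i ∈ t, w i • f (p i) - f x) := by
        simp only [smul_add, smul_comm _ θ, smul_sub, Finset.sum_add_distrib,
          Finset.sum_sub_distrib, ← Finset.smul_sum, ← Finset.sum_smul, hw₁, one_smul]

end ScalingTowardsPoint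

section OrderedField

variable {𝕜 : Type*} [Field 𝕜] [LinearOrder 𝕜] [IsStrictOrderedRing 𝕜]

theorem add_min_div_sub_mul_sub_le {a b : 𝕜} (hab : a < b) (c d : 𝕜) :
    a + min ((c - a) / (b - a)) d * (b - a) ≤ c := by
  rw [← le_sub_iff_add_le', ← le_div_iff₀ (sub_pos.mpr hab)]
  exact min_le_left _ _

theorem ES_limiter_enforces_entropy_bound_systems_general {E ι : Type*} [AddCommGroup E]
    [Module 𝕜 E] {s : Set E} {U : E → 𝕜} (hU : ConvexOn 𝕜 s U) {t : Finset ι} {ω : ι → 𝕜}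
    (hω : ∀ q ∈ t, 0 ≤ ω q) (hωsum : ∑ q ∈ t, ω q = 1) {u : ι → E} (hu : ∀ q ∈ t, u q ∈ s)
    {c : E} (hc : c ∈ s) {Uc Uhigh Uup θ : 𝕜} (hUc : Uc = U c)
    (hUhigh : Uhigh = ∑ q ∈ t, ω q * U (u q)) (hUup : Uc ≤ Uup) (hlt : Uc < Uhigh)
    (hθ : θ = min ((Uup - Uc) / (Uhigh - Uc)) 1) :
    0 ≤ θ ∧ θ ≤ 1 ∧ ∑ q ∈ t, ω q * U (c + θ • (u q - c)) ≤ Uup := by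
  have hθ₀ : 0 ≤ θ :=
    hθ ▸ le_min (div_nonneg (sub_nonneg.mpr hUup) (sub_pos.mpr hlt).le) zero_le_one
  have hθ₁ : θ ≤ 1 := hθ ▸ min_le_right _ _
  refine ⟨hθ₀, hθ₁, ?_⟩
  calc
    ∑ q ∈ t, ω q * U (c + θ • (u q - c)) ≤ Uc + θ * (Uhigh - Uc) := by
      rw [hUc, hUhigh]
      exact sum_smul_map_add_smul_sub_le_of_convexOn hU hω hωsum hu hc hθ₀ hθ₁
    _ ≤ Uup := hθ ▸ add_min_div_sub_mul_sub_le hlt Uup 1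

end OrderedField

/-- Entropy-stable limiter theorem for systems of conservation laws
(vector-valued version of Theorem 3.7, Section 4, scheme (4.10)). -/
theorem ES_limiter_enforces_entropy_bound_systems
    (E : Type*) [AddCommGroup E] [Module ℝ E]
    (U : E → ℝ) (hU : ConvexOn ℝ Set.univ U)
    (N : ℕ) (hN : 1 ≤ N)
    (ω : Fin N → ℝ) (hω : ∀ q, 0 ≤ ω q) (hωsum : ∑ q, ω q = 1)
    (u : Fin N → E) (ubar : E) (hubar : ubar = ∑ q, ω q • u q)
    (U1st Uhigh Uup : ℝ)
    (hU1st : U1st = U ubar) (hUhigh : Uhigh = ∑ q, ω q * U (u q))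
    (hUup : U1st ≤ Uup) (hlt : U1st < Uhigh)
    (θ : ℝ) (hθ : θ = min ((Uup - U1st) / (Uhigh - U1st)) 1) :
    0 ≤ θ ∧ θ ≤ 1 ∧ ∑ q, ω q * U (ubar + θ • (u q - ubar)) ≤ Uup :=
  ES_limiter_enforces_entropy_bound_systems_general hU (fun q _ ↦ hω q) hωsum
    (fun _ _ ↦ Set.mem_univ _) (Set.mem_univ ubar) hU1st hUhigh hUup hlt hθ
end
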